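/- Let M_fro(B) denote the set of d₁×d₂ real matrices with Frobenius norm at most B, and let d = max{d₁, d₂}. Then for all ε > 0, the covering number of M_fro(B) in spectral (operator) norm satisfies log N_{op}(ε, M_fro(B)) ≤ ⌊36 d B² log(9d)/ε²⌋. -/

import Mathlib

open scoped BigOperators

/-- Frobenius norm of a matrix: the ℓ₂ norm of its entries. -/
noncomputable def frobNorm {m n : ℕ} (M : Matrix (Fin m) (Fin n) ℝ) : ℝ :=
  Real.sqrt (∑ i, ∑ j, M i j ^ 2)

/-- Spectral (ℓ₂-operator) norm: `sup {‖Mx‖₂ : ‖x‖₂ ≤ 1}`. -/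
noncomputable def specNorm {m n : ℕ} (M : Matrix (Fin m) (Fin n) ℝ) : ℝ :=
  sSup {r : ℝ | ∃ x : Fin n → ℝ, Real.sqrt (∑ j, x j ^ 2) ≤ 1 ∧
    r = Real.sqrt (∑ i, M.mulVec x i ^ 2)}

/-! An operator of Hilbert–Schmidt norm at most `B` has at most `k = ⌊9 B² / ε²⌋` singular values
above `ε / 3`, so projecting onto the span of its first `k` right singular vectors writes it, up to
an operator-norm error `ε / 3`, as a product `A ∘ P` with `‖A‖ ≤ B` and `‖P‖ ≤ 1` through a
`k`-dimensional space. The factors range over balls in normed spaces of dimension at most `d k`,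
where `d` bounds the dimensions of the domain and the codomain. By volume comparison
`(1 + 6 B / ε) ^ (d k)` points cover each ball, at precision `ε / 3` for `A` and `ε / (3 B)` for
`P`. The resulting entropy `2 d k log (1 + 6 B / ε)` is bounded by `log (1 + 6 B / ε) ≤ log (9 d)`
when `B / ε ≤ d`, and by `k ≤ d` and `log (1 + 6 B / ε) ≤ 6 B / ε` otherwise. -/

open Module Metric MeasureTheory
open scoped NNReal ENNReal InnerProductSpace

section Covering

lemma isCover_iff_exists_norm_sub_le {V : Type*} [SeminormedAddCommGroup V] {s t : Set V}
    {ε : ℝ≥0} : IsCover ε s t ↔ ∀ x ∈ s, ∃ y ∈ t, ‖x - y‖ ≤ ε := by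
  simp [isCover_iff_subset_iUnion_closedBall, Set.subset_def, dist_eq_norm]

lemma isCover_add {X : Type*} [PseudoEMetricSpace X] {s t u : Set X} {ε δ : ℝ≥0}
    (hst : IsCover ε s t) (htu : IsCover δ t u) : IsCover (ε + δ) s u := by
  intro x hx
  obtain ⟨y, hy, hxy⟩ := hst hx
  obtain ⟨z, hz, hyz⟩ := htu hy
  exact ⟨z, hz, (edist_triangle x y z).trans (by push_cast; exact add_le_add hxy hyz)⟩

lemma isCover_image2_comp {𝕜 E F G : Type*} [NontriviallyNormedField 𝕜]
    [SeminormedAddCommGroup E] [NormedSpace 𝕜 E] [SeminormedAddCommGroup F] [NormedSpace 𝕜 F]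
    [SeminormedAddCommGroup G] [NormedSpace 𝕜 G]
    {S T : Set (G →L[𝕜] F)} {U V : Set (E →L[𝕜] G)} {a b η θ : ℝ≥0}
    (hT : ∀ A ∈ T, ‖A‖ ≤ a) (hU : ∀ P ∈ U, ‖P‖ ≤ b) (hST : IsCover η S T) (hUV : IsCover θ U V) :
    IsCover (η * b + a * θ) (Set.image2 (fun A P ↦ A ∘L P) S U)
      (Set.image2 (fun A P ↦ A ∘L P) T V) := by
  rw [isCover_iff_exists_norm_sub_le] at hST hUV ⊢
  rintro _ ⟨A, hA, P, hP, rfl⟩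
  obtain ⟨A', hA', hAA'⟩ := hST A hA
  obtain ⟨P', hP', hPP'⟩ := hUV P hP
  refine ⟨A' ∘L P', ⟨A', hA', P', hP', rfl⟩, ?_⟩
  calc ‖A ∘L P - A' ∘L P'‖ = ‖(A - A') ∘L P + A' ∘L (P - P')‖ := by
        simp
    _ ≤ ‖A - A'‖ * ‖P‖ + ‖A'‖ * ‖P - P'‖ :=
        norm_add_le_of_le (ContinuousLinearMap.opNorm_comp_le _ _)
          (ContinuousLinearMap.opNorm_comp_le _ _)
    _ ≤ η * b + a * θ := by
        gcongr
        · exact hU P hP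
        · exact hT A' hA'

end Covering

section Volume

variable {E : Type*} [NormedAddCommGroup E] [NormedSpace ℝ E] [FiniteDimensional ℝ E]

lemma encard_le_of_isSeparated_of_subset_closedBall {C : Set E} {x : E} {R ε : ℝ≥0} (hε : 0 < ε)
    (hC : C ⊆ closedBall x R) (hsep : IsSeparated ε C) :
    (C.encard : ℝ≥0∞) ≤ ((1 + 2 * R / ε) ^ finrank ℝ E : ℝ≥0) := by
  borelize E
  let μ : Measure E := Measure.addHaar
  have hε' : (0 : ℝ) < ε / 2 := by positivity
  have hdisj : Pairwise (Function.onFun Disjoint fun c : C ↦ ball (c : E) (ε / 2)) := by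
    intro c d hcd
    refine ball_disjoint_ball ?_
    rw [add_halves, ← coe_nndist, NNReal.coe_le_coe, ← ENNReal.coe_le_coe, ← edist_nndist]
    exact (hsep c.2 d.2 (Subtype.coe_injective.ne hcd)).le
  have hsub : ⋃ c : C, ball (c : E) (ε / 2) ⊆ ball x ((1 + 2 * R / ε) * (ε / 2)) := by
    refine Set.iUnion_subset fun c ↦ ball_subset_ball' ?_
    have hcx : dist (c : E) x ≤ R := mem_closedBall.mp (hC c.2)
    calc (ε / 2 : ℝ) + dist (c : E) x ≤ ε / 2 + R := by gcongr
      _ = (1 + 2 * R / ε) * (ε / 2) := by field_simp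
  have hvol : C.encard * μ (ball 0 (ε / 2)) ≤
      ((1 + 2 * R / ε) ^ finrank ℝ E : ℝ≥0) * μ (ball 0 (ε / 2)) :=
    calc C.encard * μ (ball 0 (ε / 2)) = ∑' c : C, μ (ball (c : E) (ε / 2)) := by
          simp only [Measure.addHaar_ball_center, ENNReal.tsum_set_const]
      _ ≤ μ (⋃ c : C, ball (c : E) (ε / 2)) :=
          tsum_meas_le_meas_iUnion_of_disjoint μ (fun _ ↦ measurableSet_ball) hdisj
      _ ≤ μ (ball x ((1 + 2 * R / ε) * (ε / 2))) := measure_mono hsub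
      _ = ((1 + 2 * R / ε) ^ finrank ℝ E : ℝ≥0) * μ (ball 0 (ε / 2)) := by
          rw [Measure.addHaar_ball_mul_of_pos μ x (by positivity)]
          congr 1
          exact_mod_cast ENNReal.ofReal_coe_nnreal (p := (1 + 2 * R / ε) ^ finrank ℝ E)
  exact (ENNReal.mul_le_mul_iff_left (measure_ball_pos μ 0 hε').ne' measure_ball_lt_top.ne).1 hvol

lemma packingNumber_closedBall_le (x : E) (R : ℝ≥0) {ε : ℝ≥0} (hε : 0 < ε) :
    packingNumber ε (closedBall x R) ≤ ⌊(1 + 2 * R / ε) ^ finrank ℝ E⌋₊ := by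
  refine iSup₂_le fun C hC ↦ iSup_le fun hsep ↦ ?_
  have hle := encard_le_of_isSeparated_of_subset_closedBall hε hC hsep
  generalize C.encard = N at hle ⊢
  cases N with
  | top => simp at hle
  | coe N =>
    rw [ENat.toENNReal_coe, ← ENNReal.coe_natCast, ENNReal.coe_le_coe] at hle
    exact_mod_cast Nat.le_floor hle

lemma exists_finset_isCover_closedBall (x : E) (R : ℝ≥0) {ε : ℝ≥0} (hε : 0 < ε) :
    ∃ T : Finset E, ↑T ⊆ closedBall x R ∧ IsCover ε (closedBall x R) (T : Set E) ∧
      T.card ≤ (1 + 2 * R / ε) ^ finrank ℝ E := by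
  have hcov := (coveringNumber_le_packingNumber ε _).trans (packingNumber_closedBall_le x R hε)
  obtain ⟨C, hCsub, hCfin, hCcov, hCcard⟩ :=
    exists_set_encard_eq_coveringNumber (ne_top_of_le_ne_top (ENat.natCast_ne_top _) hcov)
  refine ⟨hCfin.toFinset, by simpa using hCsub, by simpa using hCcov,
    (Nat.le_floor_iff (by positivity)).mp ?_⟩
  rw [← hCcard, hCfin.encard_eq_coe_toFinset_card] at hcov
  exact_mod_cast hcov

end Volume

section HilbertSchmidt

variable {𝕜 : Type*} [RCLike 𝕜]
  {E : Type*} [NormedAddCommGroup E] [InnerProductSpace 𝕜 E] [FiniteDimensional 𝕜 E]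
  {F : Type*} [NormedAddCommGroup F] [InnerProductSpace 𝕜 F] [FiniteDimensional 𝕜 F]

/-- The Hilbert–Schmidt norm: the coordinate-free Frobenius norm. It is encoded as the `ℓ₂` norm of
the singular values, which makes it independent of bases and bounds their decay directly. -/
noncomputable def hilbertSchmidtNorm (f : E →ₗ[𝕜] F) : ℝ :=
  √(∑ i ∈ Finset.range (finrank 𝕜 E), f.singularValues i ^ 2)

lemma hilbertSchmidtNorm_nonneg (f : E →ₗ[𝕜] F) : 0 ≤ hilbertSchmidtNorm f :=
  Real.sqrt_nonneg _

lemma hilbertSchmidtNorm_sq (f : E →ₗ[𝕜] F) :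
    hilbertSchmidtNorm f ^ 2 = ∑ i ∈ Finset.range (finrank 𝕜 E), f.singularValues i ^ 2 :=
  Real.sq_sqrt (by positivity)

lemma hilbertSchmidtNorm_sq_eq_sum_norm_sq {ι : Type*} [Fintype ι] (f : E →ₗ[𝕜] F)
    (b : OrthonormalBasis ι 𝕜 E) : hilbertSchmidtNorm f ^ 2 = ∑ i, ‖f (b i)‖ ^ 2 := by
  have hT := f.isSymmetric_adjoint_comp_self
  calc hilbertSchmidtNorm f ^ 2 = ∑ i, hT.eigenvalues rfl i := by
        simp_rw [hilbertSchmidtNorm_sq, Finset.sum_range, f.sq_singularValues_fin rfl]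
    _ = RCLike.re (LinearMap.trace 𝕜 E (LinearMap.adjoint f ∘ₗ f)) :=
        (hT.re_trace_eq_sum_eigenvalues rfl).symm
    _ = ∑ i, ‖f (b i)‖ ^ 2 := by
        simp [LinearMap.trace_eq_sum_inner _ b, LinearMap.adjoint_inner_right]

lemma succ_mul_singularValues_sq_le (f : E →ₗ[𝕜] F) (k : ℕ) :
    (k + 1) * f.singularValues k ^ 2 ≤ hilbertSchmidtNorm f ^ 2 := by
  obtain hk | hk := le_or_gt (finrank 𝕜 E) k
  · simpa [f.singularValues_of_finrank_le hk] using sq_nonneg (hilbertSchmidtNorm f)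
  calc (k + 1) * f.singularValues k ^ 2
      = ∑ _i ∈ Finset.range (k + 1), f.singularValues k ^ 2 := by simp
    _ ≤ ∑ i ∈ Finset.range (k + 1), f.singularValues i ^ 2 := by
        gcongr with i hi
        · exact f.singularValues_nonneg k
        · exact f.singularValues_antitone (Nat.lt_succ_iff.mp (Finset.mem_range.mp hi))
    _ ≤ ∑ i ∈ Finset.range (finrank 𝕜 E), f.singularValues i ^ 2 := by
        gcongr
        omega
    _ = hilbertSchmidtNorm f ^ 2 := (hilbertSchmidtNorm_sq f).symm

lemma singularValues_le_of_hilbertSchmidtNorm_le {f : E →ₗ[𝕜] F} {B η : ℝ} (hη : 0 < η)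
    (hf : hilbertSchmidtNorm f ≤ B) :
    f.singularValues (min (finrank 𝕜 E) ⌊(B / η) ^ 2⌋₊) ≤ η := by
  obtain h | h := min_choice (finrank 𝕜 E) ⌊(B / η) ^ 2⌋₊
  · rw [h, f.singularValues_of_finrank_le le_rfl]
    exact hη.le
  rw [h]
  set k := ⌊(B / η) ^ 2⌋₊
  have hk : B ^ 2 < (k + 1) * η ^ 2 := by
    rw [← div_lt_iff₀ (by positivity), ← div_pow]
    exact Nat.lt_floor_add_one _
  have hσ : (k + 1) * f.singularValues k ^ 2 ≤ B ^ 2 :=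
    (succ_mul_singularValues_sq_le f k).trans (pow_le_pow_left₀ (hilbertSchmidtNorm_nonneg f) hf 2)
  exact le_of_sq_le_sq (le_of_mul_le_mul_left (hσ.trans hk.le) (by positivity)) hη.le

/-- Right singular vectors of `f`: an orthonormal eigenbasis of `f⋆ f`, in decreasing order of the
singular values. The span of its first `k` vectors carries the rank-`k` truncation of `f`. -/
noncomputable def rightSingularBasis (f : E →ₗ[𝕜] F) :
    OrthonormalBasis (Fin (finrank 𝕜 E)) 𝕜 E :=
  f.isSymmetric_adjoint_comp_self.eigenvectorBasis rfl

lemma adjoint_apply_rightSingularBasis (f : E →ₗ[𝕜] F) (i : Fin (finrank 𝕜 E)) :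
    LinearMap.adjoint f (f (rightSingularBasis f i)) =
      ((f.singularValues i ^ 2 : ℝ) : 𝕜) • rightSingularBasis f i := by
  rw [f.sq_singularValues_fin rfl, ← LinearMap.comp_apply, rightSingularBasis,
    LinearMap.IsSymmetric.apply_eigenvectorBasis]

lemma norm_apply_sq_eq_sum_singularValues (f : E →ₗ[𝕜] F) (x : E) :
    ‖f x‖ ^ 2 = ∑ i : Fin (finrank 𝕜 E),
      f.singularValues i ^ 2 * ‖⟪rightSingularBasis f i, x⟫_𝕜‖ ^ 2 := by
  let b := rightSingularBasis f
  have hb (i) : ⟪b i, LinearMap.adjoint f (f x)⟫_𝕜 =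
      (f.singularValues i ^ 2 : ℝ) * ⟪b i, x⟫_𝕜 := by
    rw [LinearMap.adjoint_inner_right, ← LinearMap.adjoint_inner_left,
      adjoint_apply_rightSingularBasis, inner_smul_left, RCLike.conj_ofReal]
  calc ‖f x‖ ^ 2 = RCLike.re ⟪x, LinearMap.adjoint f (f x)⟫_𝕜 := by
        rw [LinearMap.adjoint_inner_right, inner_self_eq_norm_sq]
    _ = ∑ i, RCLike.re (⟪x, b i⟫_𝕜 * ⟪b i, LinearMap.adjoint f (f x)⟫_𝕜) := by
        rw [← b.sum_inner_mul_inner, map_sum]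
    _ = ∑ i : Fin (finrank 𝕜 E), f.singularValues i ^ 2 * ‖⟪b i, x⟫_𝕜‖ ^ 2 := by
        refine Finset.sum_congr rfl fun i _ ↦ ?_
        rw [hb, mul_left_comm, RCLike.re_ofReal_mul, inner_mul_symm_re_eq_norm, norm_mul,
          norm_inner_symm x, sq ‖_‖]

lemma exists_finrank_eq_norm_apply_le (f : E →ₗ[𝕜] F) {k : ℕ} (hk : k ≤ finrank 𝕜 E) :
    ∃ U : Submodule 𝕜 E, finrank 𝕜 U = k ∧ ∀ x ∈ Uᗮ, ‖f x‖ ≤ f.singularValues k * ‖x‖ := by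
  let b := rightSingularBasis f
  refine ⟨Submodule.span 𝕜 (Set.range (b ∘ Fin.castLE hk)), ?_, fun x hx ↦ ?_⟩
  · have hli := b.orthonormal.linearIndependent.comp _ (Fin.castLE_injective hk)
    simpa using finrank_span_eq_card hli
  have hx0 (i) (hi : i.val < k) : ⟪b i, x⟫_𝕜 = 0 :=
    hx _ (Submodule.subset_span ⟨⟨i, hi⟩, rfl⟩)
  refine le_of_sq_le_sq ?_ (mul_nonneg (f.singularValues_nonneg k) (norm_nonneg x))
  calc ‖f x‖ ^ 2 = ∑ i : Fin (finrank 𝕜 E), f.singularValues i ^ 2 * ‖⟪b i, x⟫_𝕜‖ ^ 2 :=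
        norm_apply_sq_eq_sum_singularValues f x
    _ ≤ ∑ i, f.singularValues k ^ 2 * ‖⟪b i, x⟫_𝕜‖ ^ 2 := by
        refine Finset.sum_le_sum fun i _ ↦ ?_
        obtain hi | hi := lt_or_ge i.val k
        · simp [hx0 i hi]
        · gcongr
          · exact f.singularValues_nonneg i
          · exact f.singularValues_antitone hi
    _ = (f.singularValues k * ‖x‖) ^ 2 := by
        rw [← Finset.mul_sum, b.sum_sq_norm_inner_right, mul_pow]

lemma norm_le_hilbertSchmidtNorm (f : E →L[𝕜] F) : ‖f‖ ≤ hilbertSchmidtNorm f.toLinearMap := by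
  obtain ⟨U, hU, hfU⟩ := exists_finrank_eq_norm_apply_le f.toLinearMap (Nat.zero_le _)
  rw [Submodule.finrank_eq_zero] at hU
  have hσ : f.toLinearMap.singularValues 0 ≤ hilbertSchmidtNorm f.toLinearMap := by
    refine le_of_sq_le_sq ?_ (hilbertSchmidtNorm_nonneg _)
    simpa using succ_mul_singularValues_sq_le f.toLinearMap 0
  exact (f.opNorm_le_bound (LinearMap.singularValues_nonneg _ _)
    fun x ↦ hfU x (by simp [hU])).trans hσ

lemma exists_norm_sub_comp_le_singularValues (f : E →L[𝕜] F) {k : ℕ} (hk : k ≤ finrank 𝕜 E) :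
    ∃ (A : EuclideanSpace 𝕜 (Fin k) →L[𝕜] F) (P : E →L[𝕜] EuclideanSpace 𝕜 (Fin k)),
      ‖A‖ ≤ ‖f‖ ∧ ‖P‖ ≤ 1 ∧ ‖f - A ∘L P‖ ≤ f.toLinearMap.singularValues k := by
  obtain ⟨U, hU, hfU⟩ := exists_finrank_eq_norm_apply_le f.toLinearMap hk
  let b := (stdOrthonormalBasis 𝕜 U).reindex (finCongr hU)
  let A := f ∘L U.subtypeL ∘L
    (b.repr.symm.toContinuousLinearEquiv : EuclideanSpace 𝕜 (Fin k) →L[𝕜] U)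
  let P := (b.repr.toContinuousLinearEquiv : U →L[𝕜] EuclideanSpace 𝕜 (Fin k)) ∘L
    U.orthogonalProjectionOnto
  have hAP (x) : (A ∘L P) x = f (U.starProjection x) := by simp [A, P]
  refine ⟨A, P, ?_, ?_, ?_⟩
  · refine A.opNorm_le_bound (norm_nonneg f) fun y ↦ ?_
    refine (f.le_opNorm _).trans_eq ?_
    simp [Submodule.norm_coe]
  · refine P.opNorm_le_bound zero_le_one fun x ↦ ?_
    simpa [P] using U.norm_orthogonalProjectionOnto_apply_le x
  · refine ContinuousLinearMap.opNorm_le_bound _ (LinearMap.singularValues_nonneg _ _) fun x ↦ ?_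
    have hx : ‖x - U.starProjection x‖ ≤ ‖x‖ := by
      simpa [Submodule.starProjection_orthogonal'] using Uᗮ.norm_starProjection_apply_le x
    calc ‖(f - A ∘L P) x‖ = ‖f (x - U.starProjection x)‖ := by
          rw [sub_apply, hAP, map_sub]
      _ ≤ f.toLinearMap.singularValues k * ‖x - U.starProjection x‖ :=
          hfU _ (U.sub_starProjection_mem_orthogonal x)
      _ ≤ f.toLinearMap.singularValues k * ‖x‖ :=
          mul_le_mul_of_nonneg_left hx (LinearMap.singularValues_nonneg _ _)

lemma isCover_hilbertSchmidtNorm_le_image2_comp (B : ℝ) {η : ℝ≥0} (hη : 0 < η) {k : ℕ}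
    (hk : k = min (finrank 𝕜 E) ⌊(B / η) ^ 2⌋₊) :
    IsCover η {f : E →L[𝕜] F | hilbertSchmidtNorm f.toLinearMap ≤ B}
      (Set.image2 (fun A P ↦ A ∘L P)
        (closedBall (0 : EuclideanSpace 𝕜 (Fin k) →L[𝕜] F) B)
        (closedBall (0 : E →L[𝕜] EuclideanSpace 𝕜 (Fin k)) 1)) := by
  refine isCover_iff_exists_norm_sub_le.mpr fun f hf ↦ ?_
  obtain ⟨A, P, hA, hP, hAP⟩ :=
    exists_norm_sub_comp_le_singularValues f (hk.trans_le (min_le_left _ _))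
  have hfB : ‖f‖ ≤ B := (norm_le_hilbertSchmidtNorm f).trans hf
  refine ⟨A ∘L P, ⟨A, by simpa using hA.trans hfB, P, by simpa using hP, rfl⟩, hAP.trans ?_⟩
  rw [hk]
  exact singularValues_le_of_hilbertSchmidtNorm_le (NNReal.coe_pos.mpr hη) hf

end HilbertSchmidt

section Entropy

lemma finrank_continuousLinearMap {𝕜 E F : Type*} [NontriviallyNormedField 𝕜] [CompleteSpace 𝕜]
    [NormedAddCommGroup E] [NormedSpace 𝕜 E] [FiniteDimensional 𝕜 E]
    [NormedAddCommGroup F] [NormedSpace 𝕜 F] :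
    finrank 𝕜 (E →L[𝕜] F) = finrank 𝕜 E * finrank 𝕜 F := by
  rw [← LinearMap.toContinuousLinearMap.finrank_eq, Module.finrank_linearMap]

variable {E : Type*} [NormedAddCommGroup E] [InnerProductSpace ℝ E] [FiniteDimensional ℝ E]
  {F : Type*} [NormedAddCommGroup F] [InnerProductSpace ℝ F] [FiniteDimensional ℝ F]

theorem exists_finset_isCover_hilbertSchmidtNorm_le {B ε : ℝ≥0} (hB : 0 < B) (hε : 0 < ε) :
    ∃ T : Finset (E →L[ℝ] F),
      IsCover ε {f : E →L[ℝ] F | hilbertSchmidtNorm f.toLinearMap ≤ B} (T : Set (E →L[ℝ] F)) ∧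
      T.card ≤ (1 + 6 * (B / ε)) ^
        ((finrank ℝ E + finrank ℝ F) * min (finrank ℝ E) ⌊9 * (B / ε : ℝ) ^ 2⌋₊) := by
  classical
  set k := min (finrank ℝ E) ⌊9 * (B / ε : ℝ) ^ 2⌋₊ with hk
  have hk' : k = min (finrank ℝ E) ⌊((B : ℝ) / (ε / 3 : ℝ≥0)) ^ 2⌋₊ := by
    rw [hk]
    congr 2
    push_cast
    ring
  have hlow := isCover_hilbertSchmidtNorm_le_image2_comp (𝕜 := ℝ) (E := E) (F := F) B
    (show 0 < ε / 3 by positivity) hk'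
  obtain ⟨T₁, hT₁, hcov₁, hcard₁⟩ := exists_finset_isCover_closedBall
    (0 : EuclideanSpace ℝ (Fin k) →L[ℝ] F) B (show 0 < ε / 3 by positivity)
  obtain ⟨T₂, -, hcov₂, hcard₂⟩ := exists_finset_isCover_closedBall
    (0 : E →L[ℝ] EuclideanSpace ℝ (Fin k)) 1 (show 0 < ε / (3 * B) by positivity)
  have hcomp := isCover_image2_comp (a := B) (b := 1) (fun A hA ↦ by simpa using hT₁ hA)
    (fun P hP ↦ by simpa using hP) hcov₁ hcov₂
  refine ⟨Finset.image₂ (fun A P ↦ A ∘L P) T₁ T₂, ?_, ?_⟩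
  · have hsum : ε / 3 + (ε / 3 * 1 + B * (ε / (3 * B))) = ε := by
      field_simp
      norm_num
    simpa only [Finset.coe_image₂, hsum, NNReal.coe_one] using isCover_add hlow hcomp
  · rw [finrank_continuousLinearMap, finrank_euclideanSpace_fin] at hcard₁ hcard₂
    calc ((Finset.image₂ (fun A P ↦ A ∘L P) T₁ T₂).card : ℝ≥0) ≤ T₁.card * T₂.card :=
          mod_cast Finset.card_image₂_le _ _ _
      _ ≤ (1 + 2 * B / (ε / 3)) ^ (k * finrank ℝ F) *
          (1 + 2 * 1 / (ε / (3 * B))) ^ (finrank ℝ E * k) := mul_le_mul' hcard₁ hcard₂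
      _ = (1 + 6 * (B / ε)) ^ ((finrank ℝ E + finrank ℝ F) * k) := by
          have h₁ : 2 * B / (ε / 3) = 6 * (B / ε) := by field_simp; norm_num
          have h₂ : 2 * 1 / (ε / (3 * B)) = 6 * (B / ε) := by field_simp; norm_num
          rw [h₁, h₂, ← pow_add]
          ring

end Entropy

lemma mul_log_le_floor_of_le_nine_mul_sq {d r : ℝ} {k : ℕ} (hr : 0 ≤ r) (hkd : k ≤ d)
    (hkr : k ≤ 9 * r ^ 2) :
    2 * d * (k * Real.log (1 + 6 * r)) ≤ ⌊36 * d * r ^ 2 * Real.log (9 * d)⌋₊ := by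
  obtain rfl | hk := k.eq_zero_or_pos
  · simp
  have hk1 : (1 : ℝ) ≤ k := mod_cast hk
  have hd1 : 1 ≤ d := hk1.trans hkd
  have hr1 : 1 ≤ 9 * r ^ 2 := hk1.trans hkr
  have hlog : 1 ≤ Real.log (9 * d) := by
    rw [Real.le_log_iff_exp_le (by positivity)]
    linarith [Real.exp_one_lt_three]
  have hlog_nonneg : 0 ≤ Real.log (1 + 6 * r) := Real.log_nonneg (by linarith)
  have hdr1 : 1 ≤ 9 * d * r ^ 2 := by nlinarith
  -- Half of the right-hand side is at least `1`, which pays for the floor.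
  suffices h : 2 * d * (k * Real.log (1 + 6 * r)) ≤ 18 * d * r ^ 2 * Real.log (9 * d) by
    have hfloor := Nat.lt_floor_add_one (36 * d * r ^ 2 * Real.log (9 * d))
    nlinarith
  obtain hrd | hdr := le_total r d
  · calc 2 * d * (k * Real.log (1 + 6 * r)) ≤ 2 * d * (9 * r ^ 2 * Real.log (9 * d)) := by
          have h : 1 + 6 * r ≤ 9 * d := by linarith
          gcongr
      _ = 18 * d * r ^ 2 * Real.log (9 * d) := by ring
  · calc 2 * d * (k * Real.log (1 + 6 * r)) ≤ 2 * d * (r * (6 * r)) := by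
          gcongr
          · exact hkd.trans hdr
          · linarith [Real.log_le_sub_one_of_pos (show 0 < 1 + 6 * r by positivity)]
      _ ≤ 18 * d * r ^ 2 * 1 := by nlinarith
      _ ≤ 18 * d * r ^ 2 * Real.log (9 * d) := by gcongr

lemma log_le_floor_of_le_pow {m n N : ℕ} {r : ℝ} (hr : 0 ≤ r)
    (hN : N ≤ (1 + 6 * r) ^ ((n + m) * min n ⌊9 * r ^ 2⌋₊)) :
    Real.log N ≤ ⌊36 * (max m n : ℝ) * r ^ 2 * Real.log (9 * (max m n : ℝ))⌋₊ := by
  obtain rfl | hN0 := N.eq_zero_or_pos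
  · simp
  set k := min n ⌊9 * r ^ 2⌋₊
  have hkn : k ≤ (max m n : ℝ) := le_max_of_le_right (mod_cast min_le_left _ _)
  have hkr : k ≤ 9 * r ^ 2 := (Nat.le_floor_iff (by positivity)).mp (min_le_right _ _)
  have hlog : 0 ≤ Real.log (1 + 6 * r) := Real.log_nonneg (by linarith)
  calc Real.log N ≤ Real.log ((1 + 6 * r) ^ ((n + m) * k)) := Real.log_le_log (mod_cast hN0) hN
    _ = (n + m) * (k * Real.log (1 + 6 * r)) := by
        rw [Real.log_pow]
        push_cast
        ring
    _ ≤ 2 * (max m n : ℝ) * (k * Real.log (1 + 6 * r)) := by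
        gcongr
        linarith [le_max_left (m : ℝ) n, le_max_right (m : ℝ) n]
    _ ≤ ⌊36 * (max m n : ℝ) * r ^ 2 * Real.log (9 * (max m n : ℝ))⌋₊ :=
        mul_log_le_floor_of_le_nine_mul_sq hr hkn hkr

section Matrix

variable {m n : ℕ}

lemma specNorm_eq_norm_toEuclideanLin (M : Matrix (Fin m) (Fin n) ℝ) :
    specNorm M = ‖(Matrix.toEuclideanLin M).toContinuousLinearMap‖ := by
  rw [← ContinuousLinearMap.sSup_unitClosedBall_eq_norm, specNorm]
  congr 1
  ext r
  constructor
  · rintro ⟨x, hx, rfl⟩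
    exact ⟨WithLp.toLp 2 x, by simpa [EuclideanSpace.norm_eq] using hx,
      by simp [EuclideanSpace.norm_eq]⟩
  · rintro ⟨x, hx, rfl⟩
    exact ⟨x.ofLp, by simpa [EuclideanSpace.norm_eq] using hx,
      by simp [EuclideanSpace.norm_eq, Matrix.toLpLin_apply]⟩

lemma frobNorm_eq_hilbertSchmidtNorm_toEuclideanLin (M : Matrix (Fin m) (Fin n) ℝ) :
    frobNorm M = hilbertSchmidtNorm (Matrix.toEuclideanLin M) := by
  have hcol (j) : ‖Matrix.toEuclideanLin M (EuclideanSpace.basisFun (Fin n) ℝ j)‖ ^ 2 =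
      ∑ i, M i j ^ 2 := by
    simp [EuclideanSpace.real_norm_sq_eq, Matrix.toLpLin_apply]
  rw [frobNorm, Real.sqrt_eq_iff_eq_sq (by positivity) (hilbertSchmidtNorm_nonneg _),
    hilbertSchmidtNorm_sq_eq_sum_norm_sq _ (EuclideanSpace.basisFun (Fin n) ℝ), Finset.sum_comm]
  simp_rw [hcol]

end Matrix

/-- For every `ε > 0`, the Frobenius ball of radius `B` in `d₁×d₂` matrices has an
`ε`-cover in spectral norm with log-cardinality at most `⌊36 d B² log(9d)/ε²⌋`,
where `d = max{d₁, d₂}`. -/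
theorem frobeniusBall_spectralCover (d₁ d₂ : ℕ) (B ε : ℝ) (hB : 0 < B) (hε : 0 < ε) :
    ∃ T : Finset (Matrix (Fin d₁) (Fin d₂) ℝ),
      (∀ M : Matrix (Fin d₁) (Fin d₂) ℝ, frobNorm M ≤ B →
        ∃ M' ∈ T, specNorm (M - M') ≤ ε) ∧
      Real.log T.card ≤
        (Nat.floor (36 * (max d₁ d₂ : ℝ) * B ^ 2 * Real.log (9 * (max d₁ d₂ : ℝ)) / ε ^ 2) : ℝ) := by
  lift B to ℝ≥0 using hB.le
  lift ε to ℝ≥0 using hε.le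
  let Φ : Matrix (Fin d₁) (Fin d₂) ℝ ≃ₗ[ℝ]
      EuclideanSpace ℝ (Fin d₂) →L[ℝ] EuclideanSpace ℝ (Fin d₁) :=
    Matrix.toEuclideanLin.trans LinearMap.toContinuousLinearMap
  obtain ⟨T, hT, hcard⟩ := exists_finset_isCover_hilbertSchmidtNorm_le
    (E := EuclideanSpace ℝ (Fin d₂)) (F := EuclideanSpace ℝ (Fin d₁)) (mod_cast hB) (mod_cast hε)
  rw [isCover_iff_exists_norm_sub_le] at hT
  refine ⟨T.map Φ.symm.toEquiv.toEmbedding, fun M hM ↦ ?_, ?_⟩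
  · rw [frobNorm_eq_hilbertSchmidtNorm_toEuclideanLin] at hM
    obtain ⟨g, hg, hMg⟩ := hT (Φ M) hM
    refine ⟨Φ.symm g, Finset.mem_map_of_mem _ hg, ?_⟩
    calc specNorm (M - Φ.symm g) = ‖Φ (M - Φ.symm g)‖ := specNorm_eq_norm_toEuclideanLin _
      _ = ‖Φ M - g‖ := by rw [map_sub, Φ.apply_symm_apply]
      _ ≤ ε := hMg
  · simp only [finrank_euclideanSpace_fin] at hcard
    have hlog := log_le_floor_of_le_pow (r := B / ε) (by positivity) (mod_cast hcard)
    rw [Finset.card_map]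
    convert hlog using 3
    ring
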